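/- For every integer n > 1, S ([false, true] ++ replicate (n − 2) false ++ [true]) = (3n − 2)/(3n + 1) and S ([true, true] ++ replicate (n − 2) false ++ [true]) = (3n − 1)/(3n + 2); that is, the vertex (3n−2)/(3n+1) has 0-1 sequence 01 0⋯0 (n−2 zeros) 1 and the vertex (3n−1)/(3n+2) has 0-1 sequence 11 0⋯0 (n−2 zeros) 1 on the S-tree. -/

import Mathlib

/-- Helper computing the S-tree value from the reversed 0-1 sequence. -/
def Sa : List Bool → ℚ
  | [] => 1/2
  | b :: t => if b then 1 / (1 + Sa t) else Sa t / (1 + Sa t)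

/-- The S-tree map: `S [] = 1/2`, `S (s ++ [false]) = S s / (1 + S s)` and
`S (s ++ [true]) = 1 / (1 + S s)`. -/
def S (s : List Bool) : ℚ := Sa s.reverse

/-!
A `0` step `x ↦ x / (1 + x)` adds `1` to the reciprocal of the (positive) value, so `k` zeros send
`x` to `x / (1 + k * x)`, and a final `1` step then gives `(1 + k * x) / (1 + (k + 1) * x)`. The
vertices `01` and `11` are `x = 3/4` and `x = 3/5`, and `k = n - 2`.
-/

theorem S_nil : S [] = 1 / 2 := rfl

theorem S_append_false (s : List Bool) : S (s ++ [false]) = S s / (1 + S s) := by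
  simp [S, Sa]

theorem S_append_true (s : List Bool) : S (s ++ [true]) = 1 / (1 + S s) := by
  simp [S, Sa]

theorem S_pos (s : List Bool) : 0 < S s := by
  induction s using List.reverseRecOn with
  | nil => norm_num [S_nil]
  | append_singleton s b ih =>
    cases b
    · rw [S_append_false]
      positivity
    · rw [S_append_true]
      positivity

theorem S_append_replicate_false (s : List Bool) (k : ℕ) :
    S (s ++ List.replicate k false) = S s / (1 + k * S s) := by
  have hs : 0 < S s := S_pos s
  induction k with
  | zero => simp
  | succ k ih =>
    rw [List.replicate_succ', ← List.append_assoc, S_append_false, ih]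
    push_cast
    field_simp
    ring

theorem S_append_replicate_false_append_true (s : List Bool) (k : ℕ) :
    S (s ++ List.replicate k false ++ [true]) = (1 + k * S s) / (1 + (k + 1) * S s) := by
  have hs : 0 < S s := S_pos s
  rw [S_append_true, S_append_replicate_false]
  field_simp
  ring

theorem S_false_true : S [false, true] = 3 / 4 := by
  norm_num [S, Sa]

theorem S_true_true : S [true, true] = 3 / 5 := by
  norm_num [S, Sa]

/-- For every integer `n > 1`, the vertex `(3n−2)/(3n+1)` of the S-tree has 0-1 sequence
`01 0⋯0 1` (`n−2` zeros in the middle), and the vertex `(3n−1)/(3n+2)` has 0-1 sequence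
`11 0⋯0 1` (`n−2` zeros in the middle). -/
theorem stree_thirds (n : ℕ) (hn : 1 < n) :
    S ([false, true] ++ List.replicate (n - 2) false ++ [true]) =
        (3 * (n : ℚ) - 2) / (3 * (n : ℚ) + 1) ∧
      S ([true, true] ++ List.replicate (n - 2) false ++ [true]) =
        (3 * (n : ℚ) - 1) / (3 * (n : ℚ) + 2) := by
  obtain ⟨k, rfl⟩ : ∃ k, n = k + 2 := Nat.exists_eq_add_of_le' hn
  rw [Nat.add_sub_cancel]
  push_cast
  constructor
  · rw [S_append_replicate_false_append_true, S_false_true]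
    field_simp
    ring
  · rw [S_append_replicate_false_append_true, S_true_true]
    field_simp
    ring
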